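/- For any non-regular graph G (i.e., Δ(G) ≠ δ(G)) without isolated vertices, sp(G) ≤ ⌈Δ(G)/δ(G)⌉. -/

import Mathlib

open SimpleGraph

variable {V : Type*}

/-- A subgraph is spanning if every vertex of the host graph has a neighbor in it. -/
def SpanningSub {G : SimpleGraph V} (H : G.Subgraph) : Prop :=
  ∀ v : V, ∃ w : V, H.Adj v w

/-- A subgraph is `k`-edge-colorable if its edges can be properly colored with `k` colors,
i.e. its edge set can be partitioned into `k` matchings. -/
def EdgeColorable {G : SimpleGraph V} (H : G.Subgraph) (k : ℕ) : Prop :=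
  ∃ f : H.edgeSet → Fin k, ∀ e₁ e₂ : H.edgeSet, e₁ ≠ e₂ →
    (∃ v : V, v ∈ (e₁ : Sym2 V) ∧ v ∈ (e₂ : Sym2 V)) → f e₁ ≠ f e₂

/-- A maximum `k`-edge-colorable subgraph: `k`-edge-colorable with as many edges as possible. -/
def MaximumEdgeColorable {G : SimpleGraph V} (H : G.Subgraph) (k : ℕ) : Prop :=
  EdgeColorable H k ∧
    ∀ H' : G.Subgraph, EdgeColorable H' k → H'.edgeSet.ncard ≤ H.edgeSet.ncard

/-- `sp G`: the least `k` such that `G` has a spanning `k`-edge-colorable subgraph. -/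
noncomputable def sp (G : SimpleGraph V) : ℕ :=
  sInf {k | ∃ H : G.Subgraph, SpanningSub H ∧ EdgeColorable H k}

/-- Maximum degree. -/
noncomputable def maxDeg (G : SimpleGraph V) : ℕ :=
  sSup (Set.range fun v : V => (G.neighborSet v).ncard)

/-- Minimum degree. -/
noncomputable def minDeg (G : SimpleGraph V) : ℕ :=
  sInf (Set.range fun v : V => (G.neighborSet v).ncard)

/-- Matching number. -/
noncomputable def matchNum (G : SimpleGraph V) : ℕ :=
  sSup {n | ∃ M : G.Subgraph, M.IsMatching ∧ M.edgeSet.ncard = n}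

/-!
Let `k = ⌈Δ/δ⌉`; non-regularity gives `k ≥ 2`. Counting the edges between a finite vertex set `X`
and its neighbourhood gives `δ|X| ≤ Δ|N(X)|`, hence `|X| ≤ k|N(X)|`, and Hall's theorem with `k`
copies of each target yields `f : V → V` with `f v` adjacent to `v` and all fibres of size at most
`k`.

The edges `{v, f v}` span `G`, but their maximum degree may be `k + 1`. To get down to `k`, use
these edges only for the `v` in a set `L` such that every vertex outside `L` has an `f`-preimage
in `L`, and every vertex of `L` has at most one. Degrees are then at most `k` outside `L` and at
most `2 ≤ k` in `L`. Such an `L` is built greedily: as long as some vertex `v` has no preimage, put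
`v` in `L` and discard `v` and `f v`; once every remaining vertex has a preimage, `f` permutes what
remains, and all of it can go in `L`.

Finally, an edge-minimal spanning subgraph is a star forest, and a star forest is properly
edge-coloured by numbering the leaves of each star.
-/

open Finset in
lemma exists_forall_mem_encard_fiber_le {ι α : Type*} [DecidableEq α] {t : ι → Finset α} {k : ℕ}
    (ht : ∀ s : Finset ι, #s ≤ #(s.biUnion t) * k) :
    ∃ f : ι → α, (∀ i, f i ∈ t i) ∧ ∀ a, (f ⁻¹' {a}).encard ≤ k := by
  have hall (s : Finset ι) : #s ≤ #(s.biUnion fun i ↦ t i ×ˢ (univ : Finset (Fin k))) := by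
    have : (s.biUnion fun i ↦ t i ×ˢ (univ : Finset (Fin k))) = s.biUnion t ×ˢ univ := by
      ext; simp
    simpa [this, card_product] using ht s
  obtain ⟨g, hg, hgt⟩ := (all_card_le_biUnion_card_iff_exists_injective _).1 hall
  refine ⟨fun i ↦ (g i).1, fun i ↦ (mem_product.1 (hgt i)).1, fun a ↦ ?_⟩
  have hinj : Set.InjOn (fun i ↦ (g i).2) ((fun i ↦ (g i).1) ⁻¹' {a}) :=
    fun i hi j hj hij ↦ hg (Prod.ext (Eq.trans hi (Eq.symm hj)) hij)
  simpa using Set.encard_le_encard_of_injOn (Set.mapsTo_univ _ _) hinj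

open Finset in
lemma exists_subset_union_image_injOn {α : Type*} [DecidableEq α] (f : α → α) (S : Finset α) :
    ∃ L ⊆ S, S ⊆ L ∪ L.image f ∧ Set.InjOn f (L ∩ f ⁻¹' L) := by
  induction S using Finset.strongInduction with
  | H S ih =>
  by_cases hS : S ⊆ S.image f
  · have hinj : Set.InjOn f S :=
      card_image_iff.1 (card_image_le.antisymm (card_le_card hS))
    exact ⟨S, Subset.rfl, subset_union_left, hinj.mono Set.inter_subset_left⟩
  obtain ⟨v, hvS, hv⟩ := not_subset.1 hS
  obtain ⟨L, hLS, hcover, hinj⟩ :=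
    ih (S \ {v, f v}) ((ssubset_iff_of_subset sdiff_subset).2 ⟨v, hvS, by simp⟩)
  have hfvL : f v ∉ L := fun h ↦ by simpa using hLS h
  have hsub : insert v L ⊆ S := insert_subset hvS (hLS.trans sdiff_subset)
  have hfv (u : α) (hu : u ∈ insert v L) : f u ≠ v := fun h ↦ hv (mem_image.2 ⟨u, hsub hu, h⟩)
  refine ⟨insert v L, hsub, fun x hx ↦ ?_, hinj.mono ?_⟩
  · by_cases hx' : x ∈ ({v, f v} : Finset α)
    · grind
    · have := hcover (mem_sdiff.2 ⟨hx, hx'⟩)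
      grind
  · rintro x ⟨hx, hfx⟩
    have hfxL : f x ∈ L := mem_of_mem_insert_of_ne hfx (hfv x hx)
    have hxv : x ≠ v := by rintro rfl; exact hfvL hfxL
    exact ⟨mem_of_mem_insert_of_ne hx hxv, hfxL⟩

section

variable {G : SimpleGraph V}

open Finset in
lemma card_mul_le_card_biUnion_neighborFinset_mul [DecidableEq V] [G.LocallyFinite] {d D : ℕ}
    (hd : ∀ v, d ≤ G.degree v) (hD : ∀ v, G.degree v ≤ D) (X : Finset V) :
    #X * d ≤ #(X.biUnion fun v ↦ G.neighborFinset v) * D := by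
  classical
  refine card_mul_le_card_mul G.Adj (fun v hv ↦ (hd v).trans ?_) fun w _ ↦ le_trans ?_ (hD w)
  · refine card_le_card fun w hw ↦ ?_
    exact (mem_bipartiteAbove _).2 ⟨mem_biUnion.2 ⟨v, hv, hw⟩, (G.mem_neighborFinset v w).1 hw⟩
  · refine card_le_card fun v hv ↦ ?_
    exact (G.mem_neighborFinset w v).2 ((mem_bipartiteBelow _).1 hv).2.symm

open Finset in
lemma exists_forall_adj_encard_fiber_le [G.LocallyFinite] {d D k : ℕ} (hd₀ : 0 < d)
    (hd : ∀ v, d ≤ G.degree v) (hD : ∀ v, G.degree v ≤ D) (hDk : D ≤ k * d) :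
    ∃ f : V → V, (∀ v, G.Adj v (f v)) ∧ ∀ v, (f ⁻¹' {v}).encard ≤ k := by
  classical
  have hall (X : Finset V) : #X ≤ #(X.biUnion fun v ↦ G.neighborFinset v) * k := by
    refine Nat.le_of_mul_le_mul_right (c := d) ?_ hd₀
    calc #X * d
      _ ≤ #(X.biUnion fun v ↦ G.neighborFinset v) * D :=
        card_mul_le_card_biUnion_neighborFinset_mul hd hD X
      _ ≤ #(X.biUnion fun v ↦ G.neighborFinset v) * (k * d) := Nat.mul_le_mul_left _ hDk
      _ = #(X.biUnion fun v ↦ G.neighborFinset v) * k * d := (mul_assoc _ _ _).symm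
  obtain ⟨f, hf, hfib⟩ := exists_forall_mem_encard_fiber_le hall
  exact ⟨f, fun v ↦ (G.mem_neighborFinset v _).1 (hf v), hfib⟩

/-- The graph whose edges join each vertex `v ∈ L` to its image `f v`; fixed points of `f`
contribute no edge. For a suitable `L` it is the spanning subgraph of small maximum degree. -/
def imageGraph (f : V → V) (L : Set V) : SimpleGraph V :=
  fromRel fun v w ↦ v ∈ L ∧ f v = w

variable {f : V → V} {L : Set V}

lemma imageGraph_le (hf : ∀ v ∈ L, G.Adj v (f v)) : imageGraph f L ≤ G := by
  rintro v w ⟨-, ⟨hv, rfl⟩ | ⟨hw, rfl⟩⟩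
  · exact hf v hv
  · exact (hf w hw).symm

lemma imageGraph_adj_apply {v : V} (hv : v ∈ L) (hne : v ≠ f v) : (imageGraph f L).Adj v (f v) :=
  ⟨hne, Or.inl ⟨hv, rfl⟩⟩

lemma exists_imageGraph_adj (hf : ∀ v ∈ L, v ≠ f v) (hcover : ∀ v, v ∈ L ∪ f '' L) (v : V) :
    ∃ w, (imageGraph f L).Adj v w := by
  obtain hv | ⟨u, hu, rfl⟩ := hcover v
  · exact ⟨f v, imageGraph_adj_apply hv (hf v hv)⟩
  · exact ⟨u, (imageGraph_adj_apply hu (hf u hu)).symm⟩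

lemma encard_neighborSet_imageGraph_le {k : ℕ} (hk : 2 ≤ k)
    (hfib : ∀ v ∉ L, (f ⁻¹' {v}).encard ≤ k) (hinj : Set.InjOn f (L ∩ f ⁻¹' L)) (v : V) :
    ((imageGraph f L).neighborSet v).encard ≤ k := by
  by_cases hv : v ∈ L
  · have hsub : (imageGraph f L).neighborSet v ⊆ insert (f v) (L ∩ f ⁻¹' {v}) := by
      rintro w ⟨-, ⟨-, rfl⟩ | hw⟩
      · exact Set.mem_insert _ _
      · exact Set.mem_insert_of_mem _ hw
    have hone : (L ∩ f ⁻¹' {v}).encard ≤ 1 := by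
      rw [Set.encard_le_one_iff]
      rintro a b ⟨ha, rfl⟩ ⟨hb, hab⟩
      exact hinj ⟨ha, hv⟩ ⟨hb, by rwa [Set.mem_preimage, hab]⟩ (Eq.symm hab)
    calc ((imageGraph f L).neighborSet v).encard
      _ ≤ (L ∩ f ⁻¹' {v}).encard + 1 := (Set.encard_le_encard hsub).trans (Set.encard_insert_le _ _)
      _ ≤ 1 + 1 := by gcongr
      _ ≤ k := by rw [one_add_one_eq_two]; exact_mod_cast hk
  · refine (Set.encard_le_encard ?_).trans (hfib v hv)
    rintro w ⟨-, hvL | hw⟩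
    · exact absurd hvL.1 hv
    · exact hw.2

lemma exists_le_forall_encard_neighborSet_le [Finite V] {k : ℕ} (hk : 2 ≤ k)
    (hf : ∀ v, G.Adj v (f v)) (hfib : ∀ v, (f ⁻¹' {v}).encard ≤ k) :
    ∃ H ≤ G, (∀ v, ∃ w, H.Adj v w) ∧ ∀ v, (H.neighborSet v).encard ≤ k := by
  classical
  have := Fintype.ofFinite V
  obtain ⟨L, -, hcover, hinj⟩ := exists_subset_union_image_injOn f Finset.univ
  refine ⟨imageGraph f L, imageGraph_le fun v _ ↦ hf v,
    exists_imageGraph_adj (fun v _ ↦ (hf v).ne) fun v ↦ ?_,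
    encard_neighborSet_imageGraph_le hk (fun v _ ↦ hfib v) hinj⟩
  exact_mod_cast hcover (Finset.mem_univ v)

end

/-- A graph is a star forest if every edge has an endpoint of degree one. This is the
form in which edge-minimal spanning subgraphs are recognised and coloured; no centres are recorded,
since a single-edge star has two candidates, and isolated vertices are allowed. -/
def IsStarForest (S : SimpleGraph V) : Prop :=
  ∀ ⦃v w⦄, S.Adj v w → S.neighborSet v = {w} ∨ S.neighborSet w = {v}

lemma exists_isStarForest_le [Finite V] {H : SimpleGraph V} (hH : ∀ v, ∃ w, H.Adj v w) :
    ∃ S ≤ H, (∀ v, ∃ w, S.Adj v w) ∧ IsStarForest S := by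
  obtain ⟨S, hSH, hS⟩ :=
    (Set.toFinite {S : SimpleGraph V | ∀ v, ∃ w, S.Adj v w}).exists_le_minimal hH
  refine ⟨S, hSH, hS.prop, fun v w hvw ↦ ?_⟩
  by_contra! hcon
  obtain ⟨x, hvx : S.Adj v x, hxw⟩ :=
    ((Set.nontrivial_iff_ne_singleton (s := S.neighborSet v) hvw).2 hcon.1).exists_ne w
  obtain ⟨y, hwy : S.Adj w y, hyv⟩ :=
    ((Set.nontrivial_iff_ne_singleton (s := S.neighborSet w) hvw.symm).2 hcon.2).exists_ne v
  have hdel (a : V) : ∃ b, (S.deleteEdges {s(v, w)}).Adj a b := by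
    by_cases hav : a = v
    · exact ⟨x, by simp_all [deleteEdges_adj]⟩
    by_cases haw : a = w
    · exact ⟨y, by simp_all [deleteEdges_adj]⟩
    obtain ⟨b, hb⟩ := hS.prop a
    exact ⟨b, by simp [deleteEdges_adj, hb, hav, haw]⟩
  simpa [deleteEdges_adj] using hS.le_of_le hdel (deleteEdges_le _) hvw

lemma IsStarForest.exists_eq_mk {S : SimpleGraph V} (hS : IsStarForest S) {e : Sym2 V}
    (he : e ∈ S.edgeSet) : ∃ a b, e = s(a, b) ∧ S.neighborSet b = {a} := by
  induction e with
  | _ v w =>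
    rcases hS he with h | h
    · exact ⟨w, v, Sym2.eq_swap, h⟩
    · exact ⟨v, w, rfl, h⟩

lemma eq_mk_of_neighborSet_eq_singleton {S : SimpleGraph V} {a b : V} {e : Sym2 V}
    (hb : S.neighborSet b = {a}) (he : e ∈ S.edgeSet) (hbe : b ∈ e) : e = s(a, b) := by
  obtain ⟨c, rfl⟩ := hbe
  have hc : c ∈ S.neighborSet b := he
  rw [hb, Set.mem_singleton_iff] at hc
  rw [hc, Sym2.eq_swap]

lemma IsStarForest.edgeColorable_toSubgraph {S G : SimpleGraph V} (hS : IsStarForest S)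
    (hSG : S ≤ G) {k : ℕ} (hdeg : ∀ v, (S.neighborSet v).encard ≤ k) :
    EdgeColorable (toSubgraph S hSG) k := by
  have hlabel (v : V) : ∃ φ : V → ℕ,
      Set.MapsTo φ (S.neighborSet v) (Set.Iio k) ∧ Set.InjOn φ (S.neighborSet v) :=
    (Set.finite_of_encard_le_coe (hdeg v)).exists_injOn_of_encard_le (t := Set.Iio k)
      (by simpa [← Finset.coe_Iio, Set.encard_coe_eq_coe_finsetCard] using hdeg v)
  choose label hlt hinj using hlabel
  have hends (e : (toSubgraph S hSG).edgeSet) := hS.exists_eq_mk (e := e) e.2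
  choose center leaf hmk hleaf using hends
  have hmem (e : (toSubgraph S hSG).edgeSet) : leaf e ∈ S.neighborSet (center e) := by
    have : (e : Sym2 V) ∈ S.edgeSet := e.2
    rwa [hmk e] at this
  have hcenter {v : V} {e e' : (toSubgraph S hSG).edgeSet} (hne : e ≠ e')
      (hve : v ∈ (e : Sym2 V)) (hve' : v ∈ (e' : Sym2 V)) : v = center e := by
    rw [hmk e, Sym2.mem_iff] at hve
    refine hve.resolve_right fun hv ↦ hne (Subtype.ext ?_)
    rw [hmk e, eq_mk_of_neighborSet_eq_singleton (hleaf e) e'.2 (hv ▸ hve')]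
  refine ⟨fun e ↦ ⟨label (center e) (leaf e), hlt _ (hmem e)⟩, ?_⟩
  rintro e₁ e₂ hne ⟨v, hv₁, hv₂⟩ hcol
  have hcc : center e₁ = center e₂ := (hcenter hne hv₁ hv₂).symm.trans (hcenter hne.symm hv₂ hv₁)
  have hll : leaf e₁ = leaf e₂ :=
    hinj (center e₁) (hmem e₁) (hcc ▸ hmem e₂) (by simpa [hcc] using congrArg Fin.val hcol)
  exact hne (Subtype.ext (by rw [hmk e₁, hmk e₂, hcc, hll]))

lemma sp_le_of_encard_neighborSet_le [Finite V] {G H : SimpleGraph V} (hHG : H ≤ G)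
    (hH : ∀ v, ∃ w, H.Adj v w) {k : ℕ} (hdeg : ∀ v, (H.neighborSet v).encard ≤ k) : sp G ≤ k := by
  obtain ⟨S, hSH, hspan, hS⟩ := exists_isStarForest_le hH
  exact Nat.sInf_le ⟨toSubgraph S (hSH.trans hHG), hspan,
    hS.edgeColorable_toSubgraph _ fun v ↦
      (Set.encard_le_encard fun _ hw ↦ hSH hw).trans (hdeg v)⟩

lemma sp_le_of_degree_le_mul [Finite V] {G : SimpleGraph V} [G.LocallyFinite] {d D k : ℕ}
    (hk : 2 ≤ k) (hd₀ : 0 < d) (hd : ∀ v, d ≤ G.degree v) (hD : ∀ v, G.degree v ≤ D)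
    (hDk : D ≤ k * d) : sp G ≤ k := by
  obtain ⟨f, hf, hfib⟩ := exists_forall_adj_encard_fiber_le hd₀ hd hD hDk
  obtain ⟨H, hHG, hH, hdeg⟩ := exists_le_forall_encard_neighborSet_le hk hf hfib
  exact sp_le_of_encard_neighborSet_le hHG hH hdeg

section

variable [Fintype V] (G : SimpleGraph V) [DecidableRel G.Adj]

lemma maxDeg_eq_maxDegree : maxDeg G = G.maxDegree := by
  simp only [maxDeg, Set.ncard_eq_toFinset_card', Set.toFinset_card, card_neighborSet_eq_degree]
  refine le_antisymm (csSup_le' ?_) (G.maxDegree_le_of_forall_degree_le _ fun v ↦ ?_)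
  · rintro _ ⟨v, rfl⟩
    exact G.degree_le_maxDegree v
  · exact le_csSup (Set.finite_range _).bddAbove ⟨v, rfl⟩

lemma minDeg_eq_minDegree : minDeg G = G.minDegree := by
  simp only [minDeg, Set.ncard_eq_toFinset_card', Set.toFinset_card, card_neighborSet_eq_degree]
  obtain hV | _ := isEmpty_or_nonempty V
  · simpa using hV
  refine le_antisymm (G.le_minDegree_of_forall_le_degree _ fun v ↦ Nat.sInf_le ⟨v, rfl⟩) ?_
  refine le_csInf (Set.range_nonempty _) ?_
  rintro _ ⟨v, rfl⟩
  exact G.minDegree_le_degree v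

end

/-- For any non-regular graph without isolated vertices, `sp(G) ≤ ⌈Δ(G)/δ(G)⌉`. -/
theorem sp_le_ratio_ceil {V : Type*} [Fintype V] (G : SimpleGraph V)
    (hG : ∀ v : V, ∃ w : V, G.Adj v w) (hnonreg : maxDeg G ≠ minDeg G) :
    (sp G : ℤ) ≤ ⌈(maxDeg G : ℚ) / (minDeg G : ℚ)⌉ := by
  classical
  rw [maxDeg_eq_maxDegree, minDeg_eq_minDegree] at hnonreg ⊢
  have : Nonempty V := by
    by_contra! h
    simp at hnonreg
  have hlt : G.minDegree < G.maxDegree := G.minDegree_le_maxDegree.lt_of_ne hnonreg.symm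
  have hpos : 0 < G.minDegree :=
    G.le_minDegree_of_forall_le_degree 1 fun v ↦ (G.degree_pos_iff_exists_adj v).2 (hG v)
  have hposQ : (0 : ℚ) < G.minDegree := mod_cast hpos
  rw [← Int.natCast_ceil_eq_ceil (by positivity), Nat.cast_le]
  refine sp_le_of_degree_le_mul (Nat.lt_ceil.2 ?_) hpos G.minDegree_le_degree
    G.degree_le_maxDegree ?_
  · rw [Nat.cast_one, one_lt_div hposQ]
    exact_mod_cast hlt
  · exact_mod_cast (div_le_iff₀ hposQ).1 (Nat.le_ceil ((G.maxDegree : ℚ) / G.minDegree))
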